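/- Let S be a regular system of difference fields on V over A and let I be any collection of subsets of V. Then S(V) is linearly disjoint from ∏_{v∈I} S(v)^{alg} over ∏_{v∈I} S(v). (Second linear disjointness lemma for regular systems.) -/

import Mathlib

/-- Subfields `E` and `F` of `K` containing `C` are linearly disjoint over `C`
if the multiplication map `E ⊗[C] F → K` is injective. -/
def LinearDisjointOver {K : Type*} [Field K] (C E F : Subfield K) : Prop :=
  (Submodule.span C (E : Set K)).LinearDisjoint (Submodule.span C (F : Set K))

/-- The relative algebraic closure `E^{alg}` of a subfield `E` inside `K`. -/
def algCl {K : Type*} [Field K] (E : Subfield K) : Subfield K :=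
  Subfield.closure {x : K | IsAlgebraic E x}

/-- The inversive closure `E^{inv}`: the smallest subfield of `K` containing `E`
closed under `σ` and `σ⁻¹`. -/
def invCl {K : Type*} [Field K] (σ : K ≃+* K) (E : Subfield K) : Subfield K :=
  sInf {F : Subfield K | E ≤ F ∧ (∀ x ∈ F, σ x ∈ F) ∧ ∀ x ∈ F, σ.symm x ∈ F}

/-- `E` and `F` are independent over `C`: `((E·C)^{inv})^{alg}` and
`((F·C)^{inv})^{alg}` are linearly disjoint over `(C^{inv})^{alg}`. -/
def IndependentOver {K : Type*} [Field K] (σ : K ≃+* K) (C E F : Subfield K) : Prop :=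
  LinearDisjointOver (algCl (invCl σ C)) (algCl (invCl σ (E ⊔ C))) (algCl (invCl σ (F ⊔ C)))

/-- `F ≤ E` and `E/F` is a finite Galois extension (of subfields of `K`). -/
def IsFiniteGaloisExt {K : Type*} [Field K] (F E : Subfield K) : Prop :=
  ∃ h : F ≤ E,
    letI : Algebra F E := (Subfield.inclusion h).toAlgebra
    FiniteDimensional F E ∧ IsGalois F E

/-- `I_u = {v ∩ u : v ∈ I}`. -/
def interFamily {V : Type*} [DecidableEq V] (I : Set (Finset V)) (u : Finset V) :
    Set (Finset V) :=
  {w | ∃ v ∈ I, w = v ∩ u}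

/-- A system of difference fields on `V` over `A` inside `(K, σ)`. -/
structure DiffFieldSystem {K : Type*} [Field K] (σ : K ≃+* K)
    (V : Type*) [Fintype V] [DecidableEq V] (A : Subfield K) where
  /-- the underlying map from subsets of `V` to subfields of `K` -/
  S : Finset V → Subfield K
  mono : ∀ {u v : Finset V}, u ⊆ v → S u ≤ S v
  empty_eq : S ∅ = A
  sigma_stable : ∀ u : Finset V, ∀ x ∈ S u, σ x ∈ S u
  perfect : ∀ u : Finset V, PerfectField (S u)
  /-- each `S u` has finite transcendence degree over `A` -/
  fin_trdeg : ∀ u : Finset V, ∃ t : Finset K,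
    ∀ x ∈ S u, IsAlgebraic ↥(A ⊔ Subfield.closure (t : Set K)) x
  /-- each `S u` is the perfect closure of a difference subfield generated over
  `A` by a finite set (i.e. the smallest perfect `σ`-stable subfield of `K`
  containing `A` and that finite set) -/
  fin_gen : ∀ u : Finset V, ∃ t : Finset K,
    (A ≤ S u ∧ (t : Set K) ⊆ S u) ∧
    ∀ F : Subfield K, A ≤ F → (t : Set K) ⊆ F → (∀ x ∈ F, σ x ∈ F) →
      PerfectField F → S u ≤ F
  /-- the family `(S {i})_{i ∈ V}` is independent over `A` -/
  indep : ∀ I₁ I₂ : Finset V, Disjoint I₁ I₂ →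
    IndependentOver σ A (A ⊔ ⨆ i ∈ I₁, S {i}) (A ⊔ ⨆ i ∈ I₂, S {i})
  /-- for `|u| ≥ 2`, `S u` is a finite Galois extension of
  `S(u)⁻ = ∏_{v ∈ P(u)⁻} S v` -/
  galois : ∀ u : Finset V, 2 ≤ u.card →
    IsFiniteGaloisExt (⨆ v ∈ u.powerset.erase u, S v) (S u)

namespace DiffFieldSystem

variable {K : Type*} [Field K] {σ : K ≃+* K}
variable {V : Type*} [Fintype V] [DecidableEq V] {A : Subfield K}

/-- `S(u)⁻ = ∏_{v ∈ P(u)⁻} S(v)`. -/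
def Sminus (𝒮 : DiffFieldSystem σ V A) (u : Finset V) : Subfield K :=
  ⨆ v ∈ u.powerset.erase u, 𝒮.S v

/-- `𝒮` is an `I`-system: `S u = S(u)⁻` for `u ∉ I`. -/
def IsOn (𝒮 : DiffFieldSystem σ V A) (I : Set (Finset V)) : Prop :=
  ∀ u : Finset V, u ∉ I → 𝒮.S u = 𝒮.Sminus u

/-- `𝒮` is regular: for every nonempty `u`, `S u` is linearly disjoint from
`∏_{v ∈ P(u)⁻} S(v)^{alg}` over `∏_{v ∈ P(u)⁻} S(v)`. -/
def Regular (𝒮 : DiffFieldSystem σ V A) : Prop :=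
  ∀ u : Finset V, u ≠ ∅ →
    LinearDisjointOver (𝒮.Sminus u) (𝒮.S u) (⨆ v ∈ u.powerset.erase u, algCl (𝒮.S v))

end DiffFieldSystem

/-- `I` is a simplicial complex on `V`: downward closed with union all of `V`. -/
def IsSimplicialComplexOn (V : Type*) [DecidableEq V] (I : Set (Finset V)) : Prop :=
  (∀ u ∈ I, ∀ v : Finset V, v ⊆ u → v ∈ I) ∧ ∀ i : V, ∃ u ∈ I, i ∈ u

/-!
Order the subsets `u` of `V` not dominated by `I` and adjoin them one at a time: by transitivity
it is enough that `S u` is linearly disjoint from `∏_{v ∈ I} S(v)^{alg}` over `∏_{v ∈ I} S(v)` when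
`I` is a complex containing all proper subsets of `u` but not `u`. Put `k = A^{alg}`,
`B = S(u)^{alg}` and `D = S(V \ u)^{alg}`, which are linearly disjoint over `k`. As `k` is
algebraically closed, every finitely generated `k`-algebra has a `k`-point, so `D` embeds over `k`
in an ultrapower `k*` of `k`. Linear disjointness extends this embedding to a map from
`(B D)^{alg}` to the ultrapower `K*` which is the diagonal on `B`. An algebraically closed `N`
between `k` and `B` has an algebraically closed ultrapower `N*`, which then contains the image of
`(N D)^{alg}`. Each `S(v)^{alg}` lies in `(N D)^{alg}` for `N = S(v ∩ u)^{alg}`, so their composite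
maps into the ultrapower of `M = ∏_{v ⊊ u} S(v)^{alg}`, over which elements of `B` independent over
`M` remain independent. Regularity at `u` descends from `M` to `∏_{v ⊊ u} S(v)`.
-/

section AlgebraicClosure

variable {K : Type*} [Field K] {E F : Subfield K}

theorem algCl_eq_algebraicClosure (E : Subfield K) :
    algCl E = (algebraicClosure E K).toSubfield :=
  le_antisymm (Subfield.closure_le.2 fun _ ↦ mem_algebraicClosure_iff.2)
    fun _ hx ↦ Subfield.subset_closure (mem_algebraicClosure_iff.1 hx)

theorem mem_algCl {x : K} : x ∈ algCl E ↔ IsAlgebraic E x := by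
  rw [algCl_eq_algebraicClosure]
  exact mem_algebraicClosure_iff

theorem le_algCl (E : Subfield K) : E ≤ algCl E :=
  fun x hx ↦ mem_algCl.2 (isAlgebraic_algebraMap (⟨x, hx⟩ : E))

theorem algCl_mono (h : E ≤ F) : algCl E ≤ algCl F := by
  intro x hx
  let _ : Algebra E F := (Subfield.inclusion h).toAlgebra
  have : IsScalarTower E F K := .of_algebraMap_eq fun _ ↦ rfl
  exact mem_algCl.2 ((mem_algCl.1 hx).tower_top F)

instance : Algebra E (algCl E) := (Subfield.inclusion (le_algCl E)).toAlgebra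

instance : IsScalarTower E (algCl E) K := .of_algebraMap_eq fun _ ↦ rfl

instance : Algebra.IsAlgebraic E (algCl E) :=
  ⟨fun y ↦ (isAlgebraic_algebraMap_iff (algebraMap (algCl E) K).injective).1 (mem_algCl.1 y.2)⟩

theorem algCl_le_iff : algCl E ≤ algCl F ↔ E ≤ algCl F :=
  ⟨(le_algCl E).trans, fun h ↦ (algCl_mono h).trans fun _ hx ↦
    mem_algCl.2 ((mem_algCl.1 hx).restrictScalars F)⟩

theorem algCl_eq_self (E : Subfield K) [IsAlgClosed E] : algCl E = E := by
  rw [algCl_eq_algebraicClosure,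
    IntermediateField.eq_bot_of_isAlgClosed_of_isAlgebraic (algebraicClosure E K)]
  exact le_antisymm (fun _ ⟨x, hx⟩ ↦ hx ▸ x.2) fun x hx ↦ ⟨⟨x, hx⟩, rfl⟩

instance isAlgClosed_algCl [IsAlgClosed K] (E : Subfield K) : IsAlgClosed (algCl E) := by
  rw [algCl_eq_algebraicClosure]
  exact (algebraicClosure.isAlgClosure (F := E) (E := K)).isAlgClosed

end AlgebraicClosure

section LinearDisjointness

variable {K : Type*} [Field K] {C D E F : Subfield K}

theorem span_subfield_eq_toSubmodule_adjoin (C E : Subfield K) :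
    Submodule.span C (E : Set K) = (Algebra.adjoin C (E : Set K)).toSubmodule := by
  rw [Algebra.adjoin_eq_span]
  exact congrArg (fun s : Submonoid K ↦ Submodule.span C (s : Set K))
    (Submonoid.closure_eq E.toSubmonoid).symm

theorem toSubfield_adjoin_eq_sup (C E : Subfield K) :
    (IntermediateField.adjoin C (E : Set K)).toSubfield = E ⊔ C := by
  refine le_antisymm ?_ (sup_le (IntermediateField.subset_adjoin C _) fun x hx ↦
    (IntermediateField.adjoin C (E : Set K)).algebraMap_mem ⟨x, hx⟩)
  rw [IntermediateField.adjoin_toSubfield, Subfield.closure_le, Set.union_subset_iff]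
  refine ⟨?_, SetLike.coe_subset_coe.2 le_sup_left⟩
  rintro _ ⟨x, rfl⟩
  exact SetLike.le_def.1 le_sup_right x.2

open scoped IntermediateField.algebraAdjoinAdjoin in
theorem linearIndependent_sup_iff {ι : Type*} {f : ι → K} :
    LinearIndependent ↥(E ⊔ C) f ↔ LinearIndependent (Algebra.adjoin C (E : Set K)) f := by
  rw [← toSubfield_adjoin_eq_sup]
  exact (LinearIndependent.iff_fractionRing (Algebra.adjoin C (E : Set K))
    (IntermediateField.adjoin C (E : Set K))).symm

theorem linearDisjointOver_iff_adjoin : LinearDisjointOver C E F ↔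
    (Algebra.adjoin C (E : Set K)).LinearDisjoint (Algebra.adjoin C (F : Set K)) := by
  rw [LinearDisjointOver, span_subfield_eq_toSubmodule_adjoin, span_subfield_eq_toSubmodule_adjoin]

theorem linearIndependent_of_subfield_le (h : E ≤ F) {ι : Type*} {f : ι → K}
    (hf : LinearIndependent F f) : LinearIndependent E f := by
  let _ : Algebra E F := (Subfield.inclusion h).toAlgebra
  have : IsScalarTower E F K := .of_algebraMap_eq fun _ ↦ rfl
  exact hf.restrict_scalars' E

namespace LinearDisjointOver

theorem linearIndependent_sup (h : LinearDisjointOver C E F) {ι : Type*} {f : ι → K}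
    (hfF : ∀ i, f i ∈ F) (hf : LinearIndependent C f) : LinearIndependent ↥(E ⊔ C) f := by
  let f' : ι → Algebra.adjoin C (F : Set K) := fun i ↦ ⟨f i, Algebra.subset_adjoin (hfF i)⟩
  have hf' : LinearIndependent C f' :=
    .of_comp (Algebra.adjoin C (F : Set K)).val.toLinearMap hf
  exact linearIndependent_sup_iff.2
    ((linearDisjointOver_iff_adjoin.1 h).linearIndependent_right_of_flat hf')

theorem linearIndependent (h : LinearDisjointOver C E F) (hCE : C ≤ E) {ι : Type*} {f : ι → K}
    (hfF : ∀ i, f i ∈ F) (hf : LinearIndependent C f) : LinearIndependent E f :=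
  sup_eq_left.2 hCE ▸ h.linearIndependent_sup hfF hf

theorem of_span_eq {b : Set K} (hspan : Submodule.span C b = Submodule.span C (F : Set K))
    (hC : LinearIndepOn C id b) (hE : LinearIndepOn ↥(E ⊔ C) id b) :
    LinearDisjointOver C E F := by
  have hb : Submodule.span C (Set.range fun x : b ↦ id (x : K)) =
      (Algebra.adjoin C (F : Set K)).toSubmodule := by
    rw [← span_subfield_eq_toSubmodule_adjoin, ← hspan]
    exact congrArg _ Subtype.range_coe
  let basis : Module.Basis b C (Algebra.adjoin C (F : Set K)) :=
    (Module.Basis.span hC).map (LinearEquiv.ofEq _ _ hb)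
  refine linearDisjointOver_iff_adjoin.2 (Subalgebra.LinearDisjoint.of_basis_right _ _ basis ?_)
  convert linearIndependent_sup_iff.1 hE with x
  exact congrArg Subtype.val (Module.Basis.span_apply hC x)

theorem of_forall (hCE : C ≤ E)
    (h : ∀ s : Set K, s ⊆ F → LinearIndepOn C id s → LinearIndepOn E id s) :
    LinearDisjointOver C E F := by
  obtain ⟨b, hbF, hspan, hb⟩ := exists_linearIndependent C (F : Set K)
  refine of_span_eq hspan hb ?_
  rw [sup_eq_left.2 hCE]
  exact h b hbF hb

protected theorem symm (h : LinearDisjointOver C E F) : LinearDisjointOver C F E :=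
  Submodule.LinearDisjoint.symm h

theorem mono {E' F' : Subfield K} (h : LinearDisjointOver C E F) (hE : E' ≤ E) (hF : F' ≤ F) :
    LinearDisjointOver C E' F' :=
  Submodule.LinearDisjoint.of_le_of_flat_left h (Submodule.span_mono hE) (Submodule.span_mono hF)

theorem self_right (C E : Subfield K) : LinearDisjointOver C E C :=
  Submodule.LinearDisjoint.of_right_le_one_of_flat _ _ <|
    Submodule.span_le.2 fun x hx ↦ Submodule.mem_one.2 ⟨⟨x, hx⟩, rfl⟩

theorem trans (hCD : C ≤ D) (hDE : D ≤ E) (h₁ : LinearDisjointOver C D F)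
    (h₂ : LinearDisjointOver D E F) : LinearDisjointOver C E F :=
  of_forall (hCD.trans hDE) fun s hs hC ↦
    h₂.linearIndependent hDE (fun x : s ↦ hs x.2)
      (h₁.linearIndependent hCD (fun x : s ↦ hs x.2) hC)

theorem of_le_right (h : LinearDisjointOver C E F) (hCD : C ≤ D) (hDF : D ≤ F) :
    LinearDisjointOver D E F := by
  obtain ⟨b, hbE, hspan, hb⟩ := exists_linearIndependent C (E : Set K)
  have hF : LinearIndepOn F id b :=
    h.symm.linearIndependent (hCD.trans hDF) (fun x : b ↦ hbE x.2) hb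
  let _ : Algebra C D := (Subfield.inclusion hCD).toAlgebra
  have : IsScalarTower C D K := .of_algebraMap_eq fun _ ↦ rfl
  have hspanD : Submodule.span D b = Submodule.span D (E : Set K) := by
    rw [← Submodule.span_span_of_tower C D, hspan, Submodule.span_span_of_tower]
  refine (of_span_eq hspanD (linearIndependent_of_subfield_le hDF hF) ?_).symm
  rwa [sup_eq_left.2 hDF]

theorem sup_left (h : LinearDisjointOver C E F) : LinearDisjointOver C (E ⊔ C) F :=
  of_forall le_sup_right fun s hs hC ↦ h.linearIndependent_sup (fun x : s ↦ hs x.2) hC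

end LinearDisjointOver

end LinearDisjointness

section Ultrapower

open Filter Polynomial

variable {α K : Type*} [Field K] {φ : Ultrafilter α}

instance isAlgClosed_germ [IsAlgClosed K] : IsAlgClosed (Germ (φ : Filter α) K) := by
  refine .of_exists_root _ fun p hp hirr ↦ ?_
  have hlifts : p ∈ lifts (Germ.coeRingHom (R := K) (φ : Filter α)) :=
    (lifts_iff_coeff_lifts p).2 fun n ↦ Quotient.exists_rep (p.coeff n)
  obtain ⟨q, rfl, hdeg, hq⟩ := lifts_and_natDegree_eq_and_monic hlifts hp
  have hroot (a : α) : ∃ x, (q.map (Pi.evalRingHom _ a)).IsRoot x := by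
    refine IsAlgClosed.exists_root _ (degree_ne_of_natDegree_ne ?_)
    rw [hq.natDegree_map, hdeg]
    exact hirr.natDegree_pos.ne'
  choose x hx using hroot
  have hqx : q.eval x = 0 := by
    funext a
    have hxa : (q.map (Pi.evalRingHom _ a)).eval (Pi.evalRingHom _ a x) = 0 := hx a
    rwa [eval_map, eval₂_at_apply] at hxa
  refine ⟨Germ.coeRingHom (φ : Filter α) x, ?_⟩
  rw [eval_map, eval₂_at_apply, hqx, map_zero]

/-- The map of ultrapowers induced by the inclusion of a subfield. -/
def germSubtype (φ : Ultrafilter α) (F : Subfield K) :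
    Germ (φ : Filter α) F →+* Germ (φ : Filter α) K where
  toFun := Germ.map (↑)
  map_one' := rfl
  map_zero' := rfl
  map_mul' x y := Quotient.inductionOn₂ x y fun _ _ ↦ rfl
  map_add' x y := Quotient.inductionOn₂ x y fun _ _ ↦ rfl

/-- The ultrapower of `F`, as a subfield of the ultrapower of `K`. -/
def germSubfield (φ : Ultrafilter α) (F : Subfield K) : Subfield (Germ (φ : Filter α) K) :=
  (germSubtype φ F).fieldRange

theorem mem_germSubfield {F : Subfield K} {x : Germ (φ : Filter α) K} :
    x ∈ germSubfield φ F ↔ ∃ f : α → F, ((fun a ↦ (f a : K)) : Germ (φ : Filter α) K) = x :=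
  ⟨fun ⟨y, hy⟩ ↦ Quotient.inductionOn y (fun f hf ↦ ⟨f, hf⟩) hy, fun ⟨f, hf⟩ ↦ ⟨f, hf⟩⟩

theorem germSubfield_mono {F E : Subfield K} (h : F ≤ E) : germSubfield φ F ≤ germSubfield φ E := by
  intro x hx
  obtain ⟨f, rfl⟩ := mem_germSubfield.1 hx
  exact mem_germSubfield.2 ⟨fun a ↦ Subfield.inclusion h (f a), rfl⟩

theorem const_mem_germSubfield {F : Subfield K} {x : K} (hx : x ∈ F) :
    (x : Germ (φ : Filter α) K) ∈ germSubfield φ F :=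
  mem_germSubfield.2 ⟨fun _ ↦ ⟨x, hx⟩, rfl⟩

instance isAlgClosed_germSubfield (F : Subfield K) [IsAlgClosed F] :
    IsAlgClosed (germSubfield φ F) :=
  .of_ringEquiv _ _ (germSubtype φ F).rangeRestrictFieldEquiv

theorem linearIndependent_const_germSubfield {F : Subfield K} {ι : Type*} {b : ι → K}
    (hb : LinearIndependent F b) :
    LinearIndependent (germSubfield φ F) fun i ↦ (b i : Germ (φ : Filter α) K) := by
  rw [linearIndependent_iff'] at hb ⊢
  intro s g hg
  choose f hf using fun i ↦ mem_germSubfield.1 (g i).2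
  have hsum : ∀ᶠ a in (φ : Filter α), ∑ i ∈ s, f i a • b i = 0 := by
    have hcoe : ((∑ i ∈ s, fun a ↦ f i a • b i : α → K) : Germ (φ : Filter α) K) = 0 := by
      rw [← hg]
      refine (map_sum (Germ.coeRingHom (φ : Filter α)) _ s).trans ?_
      refine Finset.sum_congr rfl fun i _ ↦ ?_
      rw [Subfield.smul_def, ← hf i]
      rfl
    filter_upwards [Germ.coe_eq.1 hcoe] with a ha
    rwa [Finset.sum_apply] at ha
  intro i hi
  refine Subtype.ext ((hf i).symm.trans (Germ.coe_eq.2 ?_))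
  filter_upwards [hsum] with a ha
  exact congrArg Subtype.val (hb s (f · a) ha i hi)

end Ultrapower

section Extension

open Filter

theorem nonempty_algHom_of_finiteType (k R : Type*) [Field k] [IsAlgClosed k] [CommRing R]
    [Nontrivial R] [Algebra k R] [Algebra.FiniteType k R] : Nonempty (R →ₐ[k] k) := by
  obtain ⟨m, hm⟩ := Ideal.exists_maximal R
  let _ : Field (R ⧸ m) := Ideal.Quotient.field m
  have : Module.Finite k (R ⧸ m) := finite_of_finite_type_of_isJacobsonRing k (R ⧸ m)
  let e : k ≃ₐ[k] R ⧸ m :=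
    .ofBijective (Algebra.ofId k _) IsAlgClosed.algebraMap_bijective_of_isIntegral
  exact ⟨e.symm.toAlgHom.comp (Ideal.Quotient.mkₐ k m)⟩

theorem exists_ringHom_germ (k R : Type*) [Field k] [IsAlgClosed k] [CommRing R]
    [Nontrivial R] [Algebra k R] :
    ∃ (φ : Ultrafilter (Finset R)) (θ : R →+* Germ (φ : Filter (Finset R)) k),
      ∀ c, θ (algebraMap k R c) = c := by
  classical
  have (s : Finset R) : Nonempty (Algebra.adjoin k (s : Set R) →ₐ[k] k) :=
    have : Algebra.FiniteType k (Algebra.adjoin k (s : Set R)) :=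
      .adjoin_of_finite s.finite_toSet
    nonempty_algHom_of_finiteType _ _
  have h (s : Finset R) : Algebra.adjoin k (s : Set R) →ₐ[k] k := Classical.choice (this s)
  let f (x : R) (s : Finset R) : k :=
    if hx : x ∈ Algebra.adjoin k (s : Set R) then h s ⟨x, hx⟩ else 0
  have f_eq {x : R} {s : Finset R} (hx : x ∈ Algebra.adjoin k (s : Set R)) :
      f x s = h s ⟨x, hx⟩ := dif_pos hx
  let φ : Ultrafilter (Finset R) := .of atTop
  have eventually_mem (x : R) :
      ∀ᶠ s : Finset R in (φ : Filter (Finset R)), x ∈ Algebra.adjoin k (s : Set R) := by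
    filter_upwards [Ultrafilter.of_le atTop (eventually_ge_atTop {x})] with s hs
    exact Algebra.subset_adjoin (hs (Finset.mem_singleton_self x))
  have f_algebraMap (c : k) : (f (algebraMap k R c) : Germ (φ : Filter (Finset R)) k) = c :=
    congrArg Germ.ofFun <| funext fun s ↦
      (f_eq (Subalgebra.algebraMap_mem _ c)).trans ((h s).commutes c)
  let θ : R →+* Germ (φ : Filter (Finset R)) k :=
    { toFun x := f x
      map_zero' := map_zero (algebraMap k R) ▸ f_algebraMap 0
      map_one' := map_one (algebraMap k R) ▸ f_algebraMap 1
      map_mul' x y := Germ.coe_eq.2 <| by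
        filter_upwards [eventually_mem x, eventually_mem y] with s hx hy
        rw [f_eq hx, f_eq hy, f_eq (mul_mem hx hy), ← map_mul]
        rfl
      map_add' x y := Germ.coe_eq.2 <| by
        filter_upwards [eventually_mem x, eventually_mem y] with s hx hy
        rw [f_eq hx, f_eq hy, f_eq (add_mem hx hy), ← map_add]
        rfl }
  exact ⟨φ, θ, f_algebraMap⟩

variable {K Ω : Type*} [Field K] [Field Ω] [IsAlgClosed Ω]

theorem exists_algCl_ringHom {T : Type*} [CommRing T] {i : T →+* K} {j : T →+* Ω}
    (hi : Function.Injective i) (hj : Function.Injective j) :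
    ∃ θ : algCl (Subfield.closure (Set.range i)) →+* Ω,
      ∀ t, θ ⟨i t, le_algCl _ (Subfield.subset_closure ⟨t, rfl⟩)⟩ = j t := by
  have : IsDomain T := hi.isDomain i
  set E := Subfield.closure (Set.range i)
  let _ : Algebra T E := (i.codRestrict E fun t ↦ Subfield.subset_closure ⟨t, rfl⟩).toAlgebra
  let _ : Algebra T (algCl E) := ((algebraMap E (algCl E)).comp (algebraMap T E)).toAlgebra
  have : IsScalarTower T E (algCl E) := .of_algebraMap_eq fun _ ↦ rfl
  let _ : Algebra T Ω := j.toAlgebra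
  have hTE : Function.Injective (algebraMap T E) := fun x y hxy ↦ hi (congrArg Subtype.val hxy)
  have : FaithfulSMul T E := (faithfulSMul_iff_algebraMap_injective _ _).2 hTE
  have : IsFractionRing T E := by
    refine .of_field _ _ fun z ↦ ?_
    obtain ⟨x, hx, y, hy, hxy⟩ := Subfield.mem_closure_iff.1 z.2
    rw [← RingHom.coe_range, Subring.closure_eq] at hx hy
    obtain ⟨x, rfl⟩ := hx
    obtain ⟨y, rfl⟩ := hy
    exact ⟨x, y, Subtype.ext hxy.symm⟩
  have : Algebra.IsAlgebraic T E := IsLocalization.isAlgebraic _ (nonZeroDivisors T)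
  have : Algebra.IsAlgebraic T (algCl E) := .trans T E _
  have : Module.IsTorsionFree T (algCl E) := Module.isTorsionFree_iff_algebraMap_injective.2
    ((algebraMap E (algCl E)).injective.comp hTE)
  have : Module.IsTorsionFree T Ω := Module.isTorsionFree_iff_algebraMap_injective.2 hj
  let θ : algCl E →ₐ[T] Ω := IsAlgClosed.lift
  exact ⟨θ, θ.commutes⟩

open scoped TensorProduct

theorem exists_injective_tensorProduct_ringHom {k B D R ι : Type*} [Field k] [CommRing B]
    [CommRing D] [CommRing R] [Algebra k B] [Algebra k D] [Algebra k R] [Algebra D R]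
    [IsScalarTower k D R] (β : B →ₐ[k] R) (b : Module.Basis ι k B)
    (hb : LinearIndependent D (β ∘ b)) :
    ∃ f : D ⊗[k] B →+* R, Function.Injective f ∧
      (∀ x, f (1 ⊗ₜ x) = β x) ∧ ∀ d, f (d ⊗ₜ 1) = algebraMap D R d := by
  let f : D ⊗[k] B →ₐ[D] R := Algebra.TensorProduct.lift (Algebra.ofId D R) β fun _ _ ↦ .all _ _
  have hfb : f ∘ Algebra.TensorProduct.basis D b = β ∘ b := by
    ext i
    simp [f]
  have hf : Function.Injective f := LinearMap.injective_of_linearIndependent (f := f.toLinearMap)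
    (Algebra.TensorProduct.basis D b).span_eq (hfb ▸ hb)
  exact ⟨f, hf, fun x ↦ by simp [f], fun d ↦ by simp [f, Algebra.ofId_apply]⟩

variable {k B D : Subfield K}

theorem exists_algCl_sup_ringHom (hkB : k ≤ B) (hkD : k ≤ D) (h : LinearDisjointOver k B D)
    (β : B →+* Ω) (δ : D →+* Ω)
    (hk : ∀ c : k, β (Subfield.inclusion hkB c) = δ (Subfield.inclusion hkD c))
    (hβ : ∀ s : Set B, LinearIndepOn k (fun x : B ↦ (x : K)) s → LinearIndepOn δ.fieldRange β s) :
    ∃ θ : algCl (B ⊔ D) →+* Ω,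
      θ.comp (Subfield.inclusion (le_sup_left.trans (le_algCl _))) = β ∧
      θ.comp (Subfield.inclusion (le_sup_right.trans (le_algCl _))) = δ := by
  let _ : Algebra k B := (Subfield.inclusion hkB).toAlgebra
  let _ : Algebra k D := (Subfield.inclusion hkD).toAlgebra
  have : IsScalarTower k D K := .of_algebraMap_eq fun _ ↦ rfl
  let _ : Algebra D Ω := δ.toAlgebra
  let _ : Algebra k Ω := (δ.comp (Subfield.inclusion hkD)).toAlgebra
  have : IsScalarTower k D Ω := .of_algebraMap_eq fun _ ↦ rfl
  let βK : B →ₐ[k] K := { B.subtype with commutes' _ := rfl }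
  let βΩ : B →ₐ[k] Ω := { β with commutes' := hk }
  let b := Module.Basis.ofVectorSpace k B
  have hbK : LinearIndependent k (βK ∘ b) :=
    b.linearIndependent.map' βK.toLinearMap (LinearMap.ker_eq_bot.2 B.subtype.injective)
  have hbD : LinearIndependent D (βK ∘ b) :=
    h.symm.linearIndependent hkD (fun i ↦ (b i).2) hbK
  have hbΩ : LinearIndependent D (βΩ ∘ b) := by
    let _ : Algebra D δ.fieldRange := δ.rangeRestrictField.toAlgebra
    have : IsScalarTower D δ.fieldRange Ω := .of_algebraMap_eq fun _ ↦ rfl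
    have hb : ⇑b = Subtype.val := Module.Basis.coe_ofVectorSpace k B
    rw [hb] at hbK ⊢
    exact (hβ _ hbK).restrict_scalars' D
  obtain ⟨i, hi, hiB, hiD⟩ := exists_injective_tensorProduct_ringHom βK b hbD
  obtain ⟨j, hj, hjB, hjD⟩ := exists_injective_tensorProduct_ringHom βΩ b hbΩ
  obtain ⟨θ, hθ⟩ := exists_algCl_ringHom hi hj
  have hle : B ⊔ D ≤ Subfield.closure (Set.range i) := by
    refine sup_le (fun x hx ↦ ?_) fun d hd ↦ ?_
    · exact Subfield.subset_closure ⟨1 ⊗ₜ ⟨x, hx⟩, hiB _⟩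
    · exact Subfield.subset_closure ⟨⟨d, hd⟩ ⊗ₜ 1, hiD _⟩
  refine ⟨θ.comp (Subfield.inclusion (algCl_mono hle)), RingHom.ext fun x ↦ ?_,
    RingHom.ext fun d ↦ ?_⟩
  · exact (congrArg θ (Subtype.ext (hiB x).symm)).trans ((hθ _).trans (hjB x))
  · exact (congrArg θ (Subtype.ext (hiD d).symm)).trans ((hθ _).trans (hjD d))

end Extension

section FirstLinearDisjointness

open Filter

variable {K Ω : Type*} [Field K] [Field Ω]

theorem le_map_comap_iff {F L : Subfield K} (hFL : F ≤ L) {θ : L →+* Ω} {E : Subfield Ω} :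
    F ≤ (E.comap θ).map L.subtype ↔ ∀ x : L, (x : K) ∈ F → θ x ∈ E := by
  refine ⟨fun h x hx ↦ ?_, fun h x hx ↦ ⟨⟨x, hFL hx⟩, h _ hx, rfl⟩⟩
  obtain ⟨y, hy, hyx⟩ := h hx
  exact Subtype.ext hyx ▸ hy

theorem map_mem_of_mem_algCl {F L : Subfield K} (hFL : F ≤ L) (θ : L →+* Ω) {E : Subfield Ω}
    [IsAlgClosed E] (hF : ∀ y : L, (y : K) ∈ F → θ y ∈ E) {y : L} (hy : (y : K) ∈ algCl F) :
    θ y ∈ E := by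
  let _ : Algebra F L := (Subfield.inclusion hFL).toAlgebra
  have : IsScalarTower F L K := .of_algebraMap_eq fun _ ↦ rfl
  have hyF : IsAlgebraic F y :=
    (isAlgebraic_algebraMap_iff (algebraMap L K).injective).1 (mem_algCl.1 hy)
  let f : F →+* E := (θ.comp (Subfield.inclusion hFL)).codRestrict E fun x ↦ hF _ x.2
  rw [← algCl_eq_self E, mem_algCl]
  exact hyF.ringHom_of_comp_eq f θ f.injective rfl

theorem linearIndependent_of_ringHom {E L : Subfield K} {E' : Subfield Ω} (θ : L →+* Ω)
    (hE : E ≤ (E'.comap θ).map L.subtype) {ι : Type*} {f : ι → L}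
    (hf : LinearIndependent E' (θ ∘ f)) : LinearIndependent E fun i ↦ (f i : K) := by
  rw [linearIndependent_iff'] at hf ⊢
  intro s g hg i hi
  choose c hc hcg using fun i ↦ hE (g i).2
  have hsum : ∑ i ∈ s, c i * f i = 0 := by
    refine L.subtype.injective ?_
    rw [map_sum, map_zero, ← hg]
    exact Finset.sum_congr rfl fun i _ ↦ by rw [map_mul, hcg, Subfield.smul_def]; rfl
  have hθ : ∑ i ∈ s, (⟨θ (c i), hc i⟩ : E') • (θ ∘ f) i = 0 := by
    rw [← map_zero θ, ← hsum, map_sum]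
    exact Finset.sum_congr rfl fun i _ ↦ (map_mul θ _ _).symm
  have hci : c i = 0 := (map_eq_zero θ).1 (congrArg Subtype.val (hf s _ hθ i hi))
  exact Subtype.ext (by rw [← hcg, hci]; rfl)

variable [IsAlgClosed K] {k B D : Subfield K} [IsAlgClosed k]

theorem exists_algCl_sup_ringHom_germ (hkB : k ≤ B) (hkD : k ≤ D) (h : LinearDisjointOver k B D) :
    ∃ (φ : Ultrafilter (Finset D)) (θ : algCl (B ⊔ D) →+* Germ (φ : Filter (Finset D)) K),
      (∀ x : algCl (B ⊔ D), (x : K) ∈ B → θ x = (x : K)) ∧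
      ∀ x : algCl (B ⊔ D), (x : K) ∈ D → θ x ∈ germSubfield φ k := by
  let _ : Algebra k D := (Subfield.inclusion hkD).toAlgebra
  obtain ⟨φ, δ, hδ⟩ := exists_ringHom_germ k D
  let β : B →+* Germ (φ : Filter (Finset D)) K :=
    ((Germ.coeRingHom (φ : Filter (Finset D))).comp (Pi.constRingHom _ K)).comp B.subtype
  have hδk : ((germSubtype φ k).comp δ).fieldRange ≤ germSubfield φ k := by
    rintro _ ⟨d, rfl⟩
    exact ⟨δ d, rfl⟩
  obtain ⟨θ, hθB, hθD⟩ := exists_algCl_sup_ringHom hkB hkD h β ((germSubtype φ k).comp δ)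
    (fun c ↦ (congrArg (germSubtype φ k) (hδ c)).symm) fun s hs ↦
      linearIndependent_of_subfield_le hδk (linearIndependent_const_germSubfield hs)
  refine ⟨φ, θ, fun x hx ↦ RingHom.congr_fun hθB ⟨x, hx⟩, fun x hx ↦ ?_⟩
  exact hδk ⟨⟨x, hx⟩, (RingHom.congr_fun hθD ⟨x, hx⟩).symm⟩

theorem LinearDisjointOver.iSup_algCl_sup (h : LinearDisjointOver k B D) (hkB : k ≤ B)
    (hkD : k ≤ D) {ι : Type*} {N : ι → Subfield K} [∀ i, IsAlgClosed (N i)]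
    (hkN : ∀ i, k ≤ N i) (hNB : ∀ i, N i ≤ B) :
    LinearDisjointOver (⨆ i, N i) (⨆ i, algCl (N i ⊔ D)) B := by
  obtain ⟨φ, θ, hθB, hθD⟩ := exists_algCl_sup_ringHom_germ hkB hkD h
  have hND (i : ι) : N i ⊔ D ≤ algCl (B ⊔ D) := (sup_le_sup_right (hNB i) D).trans (le_algCl _)
  have hθN (i : ι) (x : algCl (B ⊔ D)) (hx : (x : K) ∈ N i) : θ x ∈ germSubfield φ (N i) :=
    hθB x (hNB i hx) ▸ const_mem_germSubfield hx
  have hθND (i : ι) : ∀ x : algCl (B ⊔ D), (x : K) ∈ N i ⊔ D → θ x ∈ germSubfield φ (N i) :=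
    (le_map_comap_iff (hND i)).1 <| sup_le
      ((le_map_comap_iff (le_sup_left.trans (hND i))).2 (hθN i))
      ((le_map_comap_iff (le_sup_right.trans (hND i))).2 fun x hx ↦
        germSubfield_mono (hkN i) (hθD x hx))
  refine of_forall (iSup_mono fun i ↦ le_sup_left.trans (le_algCl _)) fun s hs hM ↦ ?_
  let f (x : s) : algCl (B ⊔ D) := ⟨x, le_algCl _ (le_sup_left (b := D) (hs x.2))⟩
  have hE : ⨆ i, algCl (N i ⊔ D) ≤
      ((germSubfield φ (⨆ i, N i)).comap θ).map (algCl (B ⊔ D)).subtype :=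
    iSup_le fun i ↦ (le_map_comap_iff (algCl_le_iff.2 (hND i))).2 fun x hx ↦
      germSubfield_mono (le_iSup N i) (map_mem_of_mem_algCl (hND i) θ (hθND i) hx)
  have hf : θ ∘ f = fun x : s ↦ ((x : K) : Germ (φ : Filter (Finset D)) K) :=
    funext fun x ↦ hθB (f x) (hs x.2)
  exact linearIndependent_of_ringHom θ hE (hf ▸ linearIndependent_const_germSubfield hM)

end FirstLinearDisjointness

section InversiveClosure

variable {K : Type*} [Field K]

theorem le_invCl (σ : K ≃+* K) (E : Subfield K) : E ≤ invCl σ E :=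
  le_sInf fun _ hF ↦ hF.1

theorem invCl_eq_self {σ : K ≃+* K} {E : Subfield K} (hE : E.map (σ : K →+* K) = E) :
    invCl σ E = E := by
  refine le_antisymm (sInf_le ⟨le_rfl, fun x hx ↦ hE ▸ ⟨x, hx, rfl⟩, fun x hx ↦ ?_⟩) (le_invCl σ E)
  obtain ⟨y, hy, rfl⟩ := hE.symm ▸ hx
  exact (σ.symm_apply_apply y).symm ▸ hy

end InversiveClosure

section LowerSets

variable {α : Type*} [CompleteLattice α]

theorem biSup_lowerClosure {β : Type*} [Preorder β] {f : β → α} (hf : Monotone f) (I : Set β) :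
    ⨆ v ∈ (lowerClosure I : Set β), f v = ⨆ v ∈ I, f v := by
  refine le_antisymm (iSup₂_le fun v hv ↦ ?_) (biSup_mono subset_lowerClosure)
  obtain ⟨w, hw, hvw⟩ := mem_lowerClosure.1 hv
  exact (hf hvw).trans (le_biSup f hw)

theorem mem_of_lt_of_minimal_notMem {β : Type*} [Preorder β] {I : Set β} {u v : β}
    (hu : Minimal (· ∉ I) u) (hv : v < u) : v ∈ I :=
  not_not.1 (hu.not_prop_of_lt hv)

theorem isLowerSet_insert_of_minimal_notMem {β : Type*} [PartialOrder β] {I : Set β}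
    (hI : IsLowerSet I) {u : β} (hu : Minimal (· ∉ I) u) : IsLowerSet (insert u I) := by
  rintro v w hwv (rfl | hv)
  · exact hwv.eq_or_lt.imp id (mem_of_lt_of_minimal_notMem hu)
  · exact .inr (hI hwv hv)

theorem biSup_inter_eq_biSup_powerset_erase {V : Type*} [DecidableEq V] {I : Set (Finset V)}
    (hI : IsLowerSet I) {u : Finset V} (hu : Minimal (· ∉ I) u) (f : Finset V → α) :
    ⨆ v ∈ I, f (v ∩ u) = ⨆ v ∈ u.powerset.erase u, f v := by
  refine le_antisymm (iSup₂_le fun v hv ↦ ?_) (iSup₂_le fun v hv ↦ ?_)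
  · refine le_biSup f (Finset.mem_ssubsets.2 (Finset.inter_subset_right.ssubset_of_ne fun h ↦ ?_))
    exact hu.prop (hI (Finset.inter_eq_right.1 h) hv)
  · have hvu : v ⊂ u := Finset.mem_ssubsets.1 hv
    have hinter : f v = f (v ∩ u) := by rw [Finset.inter_eq_left.2 hvu.subset]
    exact hinter.trans_le (le_biSup (fun v ↦ f (v ∩ u)) (mem_of_lt_of_minimal_notMem hu hvu))

end LowerSets

namespace DiffFieldSystem

variable {K : Type*} [Field K] {σ : K ≃+* K}
variable {V : Type*} [Fintype V] [DecidableEq V] {A : Subfield K}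
variable (𝒮 : DiffFieldSystem σ V A) (u : Finset V)

theorem base_le_S : A ≤ 𝒮.S u :=
  𝒮.empty_eq.ge.trans (𝒮.mono (Finset.empty_subset u))

variable {u} in
theorem S_le_algCl_Sminus (hu : 2 ≤ u.card) : 𝒮.S u ≤ algCl (𝒮.Sminus u) := by
  obtain ⟨hle, hfin, -⟩ := 𝒮.galois u hu
  let _ : Algebra (𝒮.Sminus u) (𝒮.S u) := (Subfield.inclusion hle).toAlgebra
  have : IsScalarTower (𝒮.Sminus u) (𝒮.S u) K := .of_algebraMap_eq fun _ ↦ rfl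
  have : FiniteDimensional (𝒮.Sminus u) (𝒮.S u) := hfin
  exact fun x hx ↦ mem_algCl.2 <|
    (Algebra.IsAlgebraic.isAlgebraic (R := 𝒮.Sminus u) (⟨x, hx⟩ : 𝒮.S u)).algebraMap

theorem S_le_algCl_iSup_singleton : 𝒮.S u ≤ algCl (A ⊔ ⨆ i ∈ u, 𝒮.S {i}) := by
  induction u using Finset.strongInduction with
  | H u ih =>
    obtain hu | hu := le_or_gt 2 u.card
    · refine (𝒮.S_le_algCl_Sminus hu).trans (algCl_le_iff.2 (iSup₂_le fun v hv ↦ ?_))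
      have hvu : v ⊂ u := Finset.mem_ssubsets.1 hv
      exact (ih v hvu).trans (algCl_mono (sup_le_sup_left (biSup_mono fun _ hi ↦ hvu.subset hi) A))
    · refine le_trans ?_ (le_algCl _)
      obtain h | h : u.card = 0 ∨ u.card = 1 := by lia
      · rw [Finset.card_eq_zero.1 h, 𝒮.empty_eq]
        exact le_sup_left
      · obtain ⟨i, rfl⟩ := Finset.card_eq_one.1 h
        exact le_sup_of_le_right (le_biSup (fun j ↦ 𝒮.S {j}) (Finset.mem_singleton_self i))

theorem S_le_algCl_inter_sup_compl (v : Finset V) :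
    𝒮.S v ≤ algCl (algCl (𝒮.S (v ∩ u)) ⊔ algCl (𝒮.S uᶜ)) := by
  refine (𝒮.S_le_algCl_iSup_singleton v).trans (algCl_mono (sup_le ?_ (iSup₂_le fun i hi ↦ ?_)))
  · exact le_sup_of_le_left ((𝒮.base_le_S _).trans (le_algCl _))
  · by_cases hiu : i ∈ u
    · exact le_sup_of_le_left ((𝒮.mono (by simp [hi, hiu])).trans (le_algCl _))
    · exact le_sup_of_le_right ((𝒮.mono (by simp [hiu])).trans (le_algCl _))

theorem linearDisjointOver_algCl_compl (hA : A.map (σ : K →+* K) = A) :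
    LinearDisjointOver (algCl A) (algCl (𝒮.S u)) (algCl (𝒮.S uᶜ)) := by
  have h := 𝒮.indep u uᶜ disjoint_compl_right
  rw [IndependentOver, invCl_eq_self hA] at h
  have hle (w : Finset V) :
      algCl (𝒮.S w) ≤ algCl (invCl σ ((A ⊔ ⨆ i ∈ w, 𝒮.S {i}) ⊔ A)) :=
    algCl_le_iff.2 ((𝒮.S_le_algCl_iSup_singleton w).trans
      (algCl_mono (le_sup_left.trans (le_invCl σ _))))
  exact h.mono (hle u) (hle uᶜ)

variable [IsAlgClosed K] {𝒮 u} {I : Set (Finset V)}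

theorem linearDisjointOver_iSup_algCl (hA : A.map (σ : K →+* K) = A) (hI : IsLowerSet I)
    (hu : Minimal (· ∉ I) u) :
    LinearDisjointOver (⨆ v ∈ u.powerset.erase u, algCl (𝒮.S v)) (⨆ v ∈ I, algCl (𝒮.S v))
      (algCl (𝒮.S u)) := by
  have hAS (v : Finset V) : algCl A ≤ algCl (𝒮.S v) := algCl_mono (𝒮.base_le_S v)
  have h := (𝒮.linearDisjointOver_algCl_compl u hA).iSup_algCl_sup (hAS u) (hAS uᶜ)
    (N := fun v : I ↦ algCl (𝒮.S (v ∩ u))) (fun _ ↦ hAS _)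
    fun _ ↦ algCl_mono (𝒮.mono Finset.inter_subset_right)
  rw [← biSup_inter_eq_biSup_powerset_erase hI hu fun v ↦ algCl (𝒮.S v), iSup_subtype']
  refine h.mono (iSup₂_le fun v hv ↦ ?_) le_rfl
  exact (algCl_le_iff.2 (𝒮.S_le_algCl_inter_sup_compl u v)).trans
    (le_iSup (fun v : I ↦ algCl (algCl (𝒮.S (v ∩ u)) ⊔ algCl (𝒮.S uᶜ))) ⟨v, hv⟩)

theorem Regular.linearDisjointOver_S (h𝒮 : 𝒮.Regular) (hA : A.map (σ : K →+* K) = A)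
    (hI : IsLowerSet I) (hu : Minimal (· ∉ I) u) (hu₀ : u ≠ ∅) :
    LinearDisjointOver (⨆ v ∈ I, 𝒮.S v) (𝒮.S u) (⨆ v ∈ I, algCl (𝒮.S v)) := by
  have huI (v : Finset V) (hv : v ∈ u.powerset.erase u) : v ∈ I :=
    mem_of_lt_of_minimal_notMem hu (Finset.mem_ssubsets.1 hv)
  have hSminus : LinearDisjointOver (𝒮.Sminus u) (⨆ v ∈ I, algCl (𝒮.S v)) (𝒮.S u) :=
    .trans (iSup₂_mono fun _ _ ↦ le_algCl _) (biSup_mono huI) (h𝒮 u hu₀).symm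
      ((linearDisjointOver_iSup_algCl hA hI hu).mono le_rfl (le_algCl _))
  exact hSminus.symm.of_le_right (biSup_mono huI) (iSup₂_mono fun _ _ ↦ le_algCl _)

theorem Regular.linearDisjointOver_of_isLowerSet (h𝒮 : 𝒮.Regular)
    (hA : A.map (σ : K →+* K) = A) (hI : IsLowerSet I) (h₀ : ∅ ∈ I) :
    LinearDisjointOver (⨆ v ∈ I, 𝒮.S v) (𝒮.S Finset.univ) (⨆ v ∈ I, algCl (𝒮.S v)) := by
  induction I using WellFoundedGT.induction with
  | ind I ih =>
    by_cases huniv : Finset.univ ∈ I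
    · have hS : ⨆ v ∈ I, 𝒮.S v = 𝒮.S Finset.univ :=
        le_antisymm (iSup₂_le fun v _ ↦ 𝒮.mono (Finset.subset_univ v)) (le_biSup 𝒮.S huniv)
      rw [hS]
      exact (LinearDisjointOver.self_right _ _).symm
    obtain ⟨u, hu⟩ := exists_minimal_of_wellFoundedLT (· ∉ I) ⟨_, huniv⟩
    have hu₀ : u ≠ ∅ := fun h ↦ hu.prop (h ▸ h₀)
    have hstep := (h𝒮.linearDisjointOver_S hA hI hu hu₀).sup_left
    have hnext := ih (insert u I) (Set.ssubset_insert hu.prop)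
      (isLowerSet_insert_of_minimal_notMem hI hu) (Set.mem_insert_of_mem u h₀)
    rw [iSup_insert, iSup_insert] at hnext
    have hle : 𝒮.S u ⊔ ⨆ v ∈ I, 𝒮.S v ≤ 𝒮.S Finset.univ :=
      sup_le (𝒮.mono (Finset.subset_univ u)) (iSup₂_le fun v _ ↦ 𝒮.mono (Finset.subset_univ v))
    exact .trans le_sup_right hle hstep (hnext.mono le_rfl le_sup_right)

end DiffFieldSystem

/-- (Second linear disjointness lemma for regular systems.) If `𝒮`
is a regular system of difference fields on `V` over `A` and `I` is any
collection of subsets of `V`, then `S(V)` is linearly disjoint from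
`∏_{v ∈ I} S(v)^{alg}` over `∏_{v ∈ I} S(v)`. -/
theorem regular_second_linear_disjointness
    {K : Type*} [Field K] [IsAlgClosed K] (σ : K ≃+* K)
    {V : Type*} [Fintype V] [DecidableEq V]
    (A : Subfield K) (hAperf : PerfectField A) (hAinv : A.map (σ : K →+* K) = A)
    (𝒮 : DiffFieldSystem σ V A) (hreg : 𝒮.Regular)
    (I : Set (Finset V)) :
    LinearDisjointOver
      (⨆ v ∈ I, 𝒮.S v)
      (𝒮.S Finset.univ)
      (⨆ v ∈ I, algCl (𝒮.S v)) := by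
  obtain rfl | ⟨v, hv⟩ := I.eq_empty_or_nonempty
  · simp only [Set.mem_empty_iff_false, iSup_false, iSup_bot]
    exact .self_right _ _
  have hS : Monotone 𝒮.S := fun _ _ ↦ 𝒮.mono
  have hSalg : Monotone fun v ↦ algCl (𝒮.S v) := fun _ _ h ↦ algCl_mono (hS h)
  rw [← biSup_lowerClosure hS, ← biSup_lowerClosure hSalg]
  exact hreg.linearDisjointOver_of_isLowerSet hAinv (lowerClosure I).lower
    (mem_lowerClosure.2 ⟨v, hv, Finset.empty_subset v⟩)
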